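/- Let q > −1 and p ∈ (1,∞) with p(q+1) > 1, and let f(z) = exp((1/(1−z))^{q+1}) on 𝔻, where (1−z)^{−(q+1)} is defined by the principal branch (so that f(0) = e); thus log|f(z)| = Re((1−z)^{−(q+1)}). Then m_p(r, log|f|) ≍ (1−r)^{1/p − q − 1} as r ↑ 1; that is, there exist constants c₁, c₂ > 0 and r₀ ∈ (0,1) such that c₁·(1−r)^{1/p−q−1} ≤ m_p(r, log|f|) ≤ c₂·(1−r)^{1/p−q−1} for all r ∈ (r₀, 1). -/

import Mathlib

open MeasureTheory Complex

/-- The `p`-th integral mean `m_p(r,u) = ((1/2π) ∫₀^{2π} |u(re^{iθ})|^p dθ)^{1/p}`. -/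
noncomputable def mpMean (p r : ℝ) (u : ℂ → ℝ) : ℝ :=
  ((1 / (2 * Real.pi)) *
      ∫ θ in (0 : ℝ)..(2 * Real.pi),
        |u ((r : ℂ) * Complex.exp (θ * Complex.I))| ^ p) ^ (1 / p)

/-!
The size of `Re (1 - z)^(-s)` on the circle `|z| = r` is governed by `‖1 - z‖`, which is comparable
to `(1 - r) + |θ|` for `z = r * exp (θ * I)` with `|θ| ≤ π`. Discarding the argument of
`(1 - z)^(-s)`, the `p`-th power of the mean is at most a constant times
`∫ ((1 - r) + |θ|) ^ (-p * s)`, which is of order `(1 - r) ^ (1 - p * s)` because `p * s > 1`.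
For the lower bound it suffices to keep the arc `0 ≤ θ ≤ (1 - r) / (s + 1)`: there `1 - z` has
argument at most `1 / s`, so the cosine of the argument of `(1 - z)^(-s)` is at least `1 / 2`,
while `‖1 - z‖ ≤ 2 * (1 - r)`.
-/

open Real (circleAverage)

theorem abs_arg_le_abs_im_div_re {w : ℂ} (hw : 0 < w.re) : |arg w| ≤ |w.im| / w.re := by
  have h_lt : |arg w| < Real.pi / 2 := abs_arg_lt_pi_div_two_iff.2 (Or.inl hw)
  calc |arg w| ≤ Real.tan |arg w| := Real.le_tan (abs_nonneg _) h_lt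
    _ ≤ |Real.tan (arg w)| := by
      rcases abs_choice (arg w) with h | h <;> rw [h]
      · exact le_abs_self _
      · rw [Real.tan_neg]
        exact neg_le_abs _
    _ = |w.im| / w.re := by rw [tan_arg, abs_div, abs_of_pos hw]

theorem half_norm_rpow_le_re_cpow {w : ℂ} {s : ℝ} (hw : 0 < w.re) (hs : |s| * |w.im| ≤ w.re) :
    ‖w‖ ^ s / 2 ≤ (w ^ (s : ℂ)).re := by
  have h_arg : |arg w * s| ≤ 1 := by
    calc |arg w * s| ≤ |w.im| / w.re * |s| := by
          rw [abs_mul]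
          gcongr
          exact abs_arg_le_abs_im_div_re hw
      _ = |s| * |w.im| / w.re := by ring
      _ ≤ 1 := (div_le_one hw).2 hs
  have h_cos : 1 / 2 ≤ Real.cos (arg w * s) := by
    linarith [Real.one_sub_sq_div_two_le_cos (x := arg w * s), (sq_le_one_iff_abs_le_one _).2 h_arg]
  rw [cpow_ofReal_re, div_eq_mul_one_div]
  gcongr

theorem abs_re_cpow_rpow_le {w : ℂ} {s p : ℝ} (hp : 0 ≤ p) :
    |(w ^ (s : ℂ)).re| ^ p ≤ ‖w‖ ^ (s * p) := by
  rw [Real.rpow_mul (norm_nonneg w), ← norm_cpow_real]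
  gcongr
  exact abs_re_le_norm _

theorem one_sub_circleMap_zero_re (r θ : ℝ) : (1 - circleMap 0 r θ).re = 1 - r * Real.cos θ := by
  simp [circleMap_zero, exp_ofReal_mul_I_re]

theorem one_sub_circleMap_zero_im (r θ : ℝ) : (1 - circleMap 0 r θ).im = -(r * Real.sin θ) := by
  simp [circleMap_zero, exp_ofReal_mul_I_im]

theorem norm_one_sub_circleMap_zero_sq (r θ : ℝ) :
    ‖1 - circleMap 0 r θ‖ ^ 2 = (1 - r) ^ 2 + 2 * r * (1 - Real.cos θ) := by
  rw [Complex.sq_norm, normSq_apply, one_sub_circleMap_zero_re, one_sub_circleMap_zero_im]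
  linear_combination r ^ 2 * Real.sin_sq_add_cos_sq θ

theorem norm_one_sub_circleMap_zero_le (r θ : ℝ) :
    ‖1 - circleMap 0 r θ‖ ≤ |1 - r| + |r| * |θ| := by
  calc ‖1 - circleMap 0 r θ‖ = ‖((1 - r : ℝ) : ℂ) - r * (exp (I * θ) - 1)‖ := by
        rw [circleMap_zero, mul_comm I]
        push_cast
        ring_nf
    _ ≤ |1 - r| + |r| * ‖exp (I * θ) - 1‖ := by
        simpa only [norm_mul, norm_real, Real.norm_eq_abs] using
          norm_sub_le ((1 - r : ℝ) : ℂ) (r * (exp (I * θ) - 1))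
    _ ≤ |1 - r| + |r| * |θ| := by
        gcongr
        exact Real.norm_exp_I_mul_ofReal_sub_one_le

theorem le_norm_one_sub_circleMap_zero {r θ : ℝ} (hr : 1 / 2 ≤ r) (hθ : |θ| ≤ Real.pi) :
    (|1 - r| + |θ|) / Real.pi ≤ ‖1 - circleMap 0 r θ‖ := by
  have h_cos : 2 * (θ ^ 2 / Real.pi ^ 2) ≤ 1 - Real.cos θ := by
    linear_combination Real.cos_le_one_sub_mul_cos_sq hθ
  have h_pi : 2 / Real.pi ^ 2 ≤ 1 := by
    rw [div_le_one (by positivity)]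
    nlinarith [Real.pi_gt_three]
  refine le_of_sq_le_sq ?_ (norm_nonneg _)
  calc ((|1 - r| + |θ|) / Real.pi) ^ 2
      ≤ 2 * (|1 - r| ^ 2 + |θ| ^ 2) / Real.pi ^ 2 := by
        rw [div_pow]
        gcongr
        exact add_sq_le
    _ = 2 / Real.pi ^ 2 * (1 - r) ^ 2 + 1 * (2 * (θ ^ 2 / Real.pi ^ 2)) := by
        simp only [sq_abs]
        ring
    _ ≤ 1 * (1 - r) ^ 2 + 2 * r * (1 - Real.cos θ) := by
        gcongr
        linarith
    _ = ‖1 - circleMap 0 r θ‖ ^ 2 := by rw [norm_one_sub_circleMap_zero_sq, one_mul]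

theorem norm_one_sub_circleMap_zero_rpow_neg_le {a r θ : ℝ} (ha : 0 ≤ a) (hr : 1 / 2 ≤ r)
    (hr_ne : r ≠ 1) (hθ : |θ| ≤ Real.pi) :
    ‖1 - circleMap 0 r θ‖ ^ (-a) ≤ Real.pi ^ a * (|1 - r| + |θ|) ^ (-a) := by
  have := abs_sub_pos.2 hr_ne.symm
  calc ‖1 - circleMap 0 r θ‖ ^ (-a) ≤ ((|1 - r| + |θ|) / Real.pi) ^ (-a) :=
        Real.rpow_le_rpow_of_nonpos (by positivity) (le_norm_one_sub_circleMap_zero hr hθ)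
          (neg_nonpos.2 ha)
    _ = Real.pi ^ a * (|1 - r| + |θ|) ^ (-a) := by
        rw [Real.div_rpow (by positivity) Real.pi_pos.le, Real.rpow_neg Real.pi_pos.le,
          div_inv_eq_mul, mul_comm]

theorem integral_add_rpow_neg_le {a b δ : ℝ} (ha : 1 < a) (hδ : 0 < δ) (hb : 0 ≤ b) :
    ∫ x in (0 : ℝ)..b, (δ + x) ^ (-a) ≤ δ ^ (1 - a) / (a - 1) := by
  have h_zero : (0 : ℝ) ∉ Set.uIcc (δ + 0) (δ + b) := by
    rw [Set.uIcc_of_le (by linarith)]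
    exact fun h => by linarith [h.1]
  rw [intervalIntegral.integral_comp_add_left (fun x => x ^ (-a)),
    integral_rpow (Or.inr ⟨by linarith, h_zero⟩), ← neg_div_neg_eq, neg_sub, add_zero,
    neg_add_eq_sub, neg_sub]
  have := sub_pos.2 ha
  gcongr
  exact sub_le_self _ (by positivity)

theorem integral_add_abs_rpow_neg_le {a b δ : ℝ} (ha : 1 < a) (hδ : 0 < δ) (hb : 0 ≤ b) :
    ∫ x in -b..b, (δ + |x|) ^ (-a) ≤ 2 * (δ ^ (1 - a) / (a - 1)) := by
  have h_int (c d : ℝ) : IntervalIntegrable (fun x => (δ + |x|) ^ (-a)) volume c d :=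
    Continuous.intervalIntegrable (Continuous.rpow_const (by fun_prop)
      fun x => Or.inl (by positivity)) c d
  have h_left : ∫ x in -b..0, (δ + |x|) ^ (-a) = ∫ x in (0 : ℝ)..b, (δ + |x|) ^ (-a) := by
    simpa using (intervalIntegral.integral_comp_neg (a := 0) (b := b)
      fun x => (δ + |x|) ^ (-a)).symm
  have h_right : ∫ x in (0 : ℝ)..b, (δ + |x|) ^ (-a) = ∫ x in (0 : ℝ)..b, (δ + x) ^ (-a) := by
    refine intervalIntegral.integral_congr fun x hx => ?_
    rw [Set.uIcc_of_le hb] at hx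
    simp only [abs_of_nonneg hx.1]
  rw [← intervalIntegral.integral_add_adjacent_intervals (h_int (-b) 0) (h_int 0 b), h_left,
    h_right, ← two_mul]
  gcongr
  exact integral_add_rpow_neg_le ha hδ hb

theorem circleAverage_eq_integral_neg_pi_pi {E : Type*} [NormedAddCommGroup E] [NormedSpace ℝ E]
    (g : ℂ → E) (c : ℂ) (r : ℝ) :
    circleAverage g c r
      = (2 * Real.pi)⁻¹ • ∫ θ in -Real.pi..Real.pi, g (circleMap c r θ) := by
  have h_period := ((periodic_circleMap c r).comp g).intervalIntegral_add_eq 0 (-Real.pi)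
  rw [zero_add, show -Real.pi + 2 * Real.pi = Real.pi by ring] at h_period
  rw [Real.circleAverage_def]
  exact congrArg _ h_period

theorem mul_le_circleAverage {g : ℂ → ℝ} {c : ℂ} {r h m : ℝ} (hg : CircleIntegrable g c r)
    (hg_nonneg : 0 ≤ g) (hh : 0 ≤ h) (hh_le : h ≤ 2 * Real.pi)
    (hm : ∀ θ ∈ Set.Icc 0 h, m ≤ g (circleMap c r θ)) :
    (2 * Real.pi)⁻¹ * (h * m) ≤ circleAverage g c r := by
  have hg_arc : IntervalIntegrable (fun θ => g (circleMap c r θ)) volume 0 h :=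
    hg.mono_set (Set.uIcc_subset_uIcc_left (Set.mem_uIcc_of_le hh hh_le))
  rw [Real.circleAverage_def, smul_eq_mul]
  gcongr
  calc h * m = ∫ _ in (0 : ℝ)..h, m := by simp
    _ ≤ ∫ θ in (0 : ℝ)..h, g (circleMap c r θ) :=
      intervalIntegral.integral_mono_on hh intervalIntegrable_const hg_arc hm
    _ ≤ ∫ θ in (0 : ℝ)..(2 * Real.pi), g (circleMap c r θ) :=
      intervalIntegral.integral_mono_interval le_rfl hh hh_le
        (Filter.Eventually.of_forall fun _ => hg_nonneg _) hg

theorem one_sub_mem_slitPlane {z : ℂ} (hz : ‖z‖ < 1) : 1 - z ∈ slitPlane := by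
  simpa only [sub_eq_add_neg] using mem_slitPlane_of_norm_lt_one (norm_neg z ▸ hz)

theorem circleIntegrable_of_continuousOn_ball {E : Type*} [NormedAddCommGroup E] {g : ℂ → E}
    {c : ℂ} {r R : ℝ} (hr : |r| < R) (hg : ContinuousOn g (Metric.ball c R)) :
    CircleIntegrable g c r :=
  ContinuousOn.circleIntegrable' <|
    hg.mono (Metric.sphere_subset_closedBall.trans (Metric.closedBall_subset_ball hr))

theorem circleIntegrable_norm_one_sub_rpow {r : ℝ} (hr : |r| < 1) (a : ℝ) :
    CircleIntegrable (fun z => ‖1 - z‖ ^ a) 0 r := by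
  refine circleIntegrable_of_continuousOn_ball hr ?_
  refine ContinuousOn.rpow_const (by fun_prop) fun z hz => Or.inl ?_
  exact norm_ne_zero_iff.2 (slitPlane_ne_zero (one_sub_mem_slitPlane (mem_ball_zero_iff.1 hz)))

theorem circleIntegrable_abs_re_one_sub_cpow_rpow {r p : ℝ} (hr : |r| < 1) (hp : 0 ≤ p) (s : ℂ) :
    CircleIntegrable (fun z => |((1 - z) ^ s).re| ^ p) 0 r := by
  refine circleIntegrable_of_continuousOn_ball hr ?_
  refine ContinuousOn.rpow_const (ContinuousOn.abs ?_) fun _ _ => Or.inr hp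
  refine continuous_re.comp_continuousOn (ContinuousOn.cpow_const (by fun_prop) fun z hz => ?_)
  exact one_sub_mem_slitPlane (mem_ball_zero_iff.1 hz)

theorem circleAverage_norm_one_sub_rpow_neg_le {a r : ℝ} (ha : 1 < a) (hr : 1 / 2 ≤ r)
    (hr_lt : r < 1) :
    circleAverage (fun z => ‖1 - z‖ ^ (-a)) 0 r
      ≤ Real.pi ^ a / (Real.pi * (a - 1)) * (1 - r) ^ (1 - a) := by
  have hδ : 0 < 1 - r := sub_pos.2 hr_lt
  have hr_abs : |r| < 1 := abs_lt.2 ⟨by linarith, hr_lt⟩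
  rw [circleAverage_eq_integral_neg_pi_pi, smul_eq_mul]
  calc (2 * Real.pi)⁻¹ * ∫ θ in -Real.pi..Real.pi, ‖1 - circleMap 0 r θ‖ ^ (-a)
      ≤ (2 * Real.pi)⁻¹ * ∫ θ in -Real.pi..Real.pi, Real.pi ^ a * (1 - r + |θ|) ^ (-a) := by
        gcongr
        refine intervalIntegral.integral_mono_on (by linarith [Real.pi_pos]) ?_ ?_ fun θ hθ => ?_
        · exact ((periodic_circleMap 0 r).comp fun z => ‖1 - z‖ ^ (-a)).intervalIntegrable₀
            Real.two_pi_pos.ne' (circleIntegrable_norm_one_sub_rpow hr_abs _) _ _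
        · exact Continuous.intervalIntegrable (continuous_const.mul (Continuous.rpow_const
            (by fun_prop) fun θ => Or.inl (by positivity))) _ _
        · simpa only [abs_of_pos hδ] using
            norm_one_sub_circleMap_zero_rpow_neg_le (by linarith) hr hr_lt.ne (abs_le.2 hθ)
    _ ≤ (2 * Real.pi)⁻¹ * (Real.pi ^ a * (2 * ((1 - r) ^ (1 - a) / (a - 1)))) := by
        rw [intervalIntegral.integral_const_mul]
        gcongr
        exact integral_add_abs_rpow_neg_le ha hδ Real.pi_pos.le
    _ = Real.pi ^ a / (Real.pi * (a - 1)) * (1 - r) ^ (1 - a) := by field_simp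

theorem le_re_one_sub_circleMap_zero_cpow_neg {r s θ : ℝ} (hs : 0 ≤ s) (hr : 0 ≤ r)
    (hr_lt : r < 1) (hθ : 0 ≤ θ) (hθ_le : θ ≤ (1 - r) / (s + 1)) :
    (2 * (1 - r)) ^ (-s) / 2 ≤ ((1 - circleMap 0 r θ) ^ ((-s : ℝ) : ℂ)).re := by
  rw [le_div_iff₀ (by positivity)] at hθ_le
  have h_re : 1 - r ≤ (1 - circleMap 0 r θ).re := by
    rw [one_sub_circleMap_zero_re]
    nlinarith [Real.cos_le_one θ]
  have h_im : |(1 - circleMap 0 r θ).im| ≤ θ := by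
    rw [one_sub_circleMap_zero_im, abs_neg, abs_mul, abs_of_nonneg hr]
    calc r * |Real.sin θ| ≤ 1 * |θ| :=
          mul_le_mul hr_lt.le Real.abs_sin_le_abs (abs_nonneg _) zero_le_one
      _ = θ := by rw [one_mul, abs_of_nonneg hθ]
  have h_re_pos : 0 < (1 - circleMap 0 r θ).re := by linarith
  have h_sector : |-s| * |(1 - circleMap 0 r θ).im| ≤ (1 - circleMap 0 r θ).re := by
    rw [abs_neg, abs_of_nonneg hs]
    nlinarith
  have h_norm : ‖1 - circleMap 0 r θ‖ ≤ 2 * (1 - r) := by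
    have h_le := norm_one_sub_circleMap_zero_le r θ
    rw [abs_of_pos (sub_pos.2 hr_lt), abs_of_nonneg hr, abs_of_nonneg hθ] at h_le
    nlinarith
  calc (2 * (1 - r)) ^ (-s) / 2 ≤ ‖1 - circleMap 0 r θ‖ ^ (-s) / 2 := by
        gcongr ?_ / 2
        exact Real.rpow_le_rpow_of_nonpos (h_re_pos.trans_le (re_le_norm _)) h_norm (by linarith)
    _ ≤ ((1 - circleMap 0 r θ) ^ ((-s : ℝ) : ℂ)).re := half_norm_rpow_le_re_cpow h_re_pos h_sector

theorem le_circleAverage_abs_re_one_sub_cpow_neg_rpow {p r s : ℝ} (hp : 0 ≤ p) (hs : 0 ≤ s)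
    (hr : 0 ≤ r) (hr_lt : r < 1) :
    (2 ^ (-s) / 2) ^ p / (2 * Real.pi * (s + 1)) * (1 - r) ^ (1 - p * s)
      ≤ circleAverage (fun z => |((1 - z) ^ ((-s : ℝ) : ℂ)).re| ^ p) 0 r := by
  have hδ : 0 < 1 - r := sub_pos.2 hr_lt
  have h_arc : (1 - r) / (s + 1) ≤ 2 * Real.pi := by
    rw [div_le_iff₀ (by positivity)]
    nlinarith [Real.pi_gt_three]
  calc (2 ^ (-s) / 2) ^ p / (2 * Real.pi * (s + 1)) * (1 - r) ^ (1 - p * s)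
      = (2 * Real.pi)⁻¹ * ((1 - r) / (s + 1) * ((2 * (1 - r)) ^ (-s) / 2) ^ p) := by
        rw [Real.mul_rpow zero_le_two hδ.le, mul_div_right_comm,
          Real.mul_rpow (by positivity) (by positivity), ← Real.rpow_mul hδ.le,
          sub_eq_add_neg 1 (p * s), Real.rpow_add hδ, Real.rpow_one, neg_mul, mul_comm s]
        field_simp
    _ ≤ _ := by
        refine mul_le_circleAverage
          (circleIntegrable_abs_re_one_sub_cpow_rpow (abs_lt.2 ⟨by linarith, hr_lt⟩) hp _)
          (fun _ => by positivity) (by positivity) h_arc fun θ hθ => ?_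
        gcongr
        exact (le_re_one_sub_circleMap_zero_cpow_neg hs hr hr_lt hθ.1 hθ.2).trans (le_abs_self _)

theorem mpMean_eq_circleAverage_rpow (p r : ℝ) (u : ℂ → ℝ) :
    mpMean p r u = circleAverage (fun z => |u z| ^ p) 0 r ^ (1 / p) := by
  simp only [mpMean, Real.circleAverage_def, circleMap_zero, smul_eq_mul, one_div]

theorem mul_rpow_one_sub_mul_rpow_one_div {p C δ : ℝ} (hp : p ≠ 0) (hC : 0 ≤ C) (hδ : 0 ≤ δ)
    (s : ℝ) : (C * δ ^ (1 - p * s)) ^ (1 / p) = C ^ (1 / p) * δ ^ (1 / p - s) := by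
  rw [Real.mul_rpow hC (by positivity), ← Real.rpow_mul hδ]
  congr 2
  field_simp

theorem le_mpMean_re_one_sub_cpow_neg {p r s : ℝ} (hp : 0 < p) (hs : 0 ≤ s) (hr : 0 ≤ r)
    (hr_lt : r < 1) :
    ((2 ^ (-s) / 2) ^ p / (2 * Real.pi * (s + 1))) ^ (1 / p) * (1 - r) ^ (1 / p - s)
      ≤ mpMean p r fun z => ((1 - z) ^ ((-s : ℝ) : ℂ)).re := by
  have hδ : 0 < 1 - r := sub_pos.2 hr_lt
  rw [mpMean_eq_circleAverage_rpow,
    ← mul_rpow_one_sub_mul_rpow_one_div hp.ne' (by positivity) hδ.le]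
  gcongr
  exact le_circleAverage_abs_re_one_sub_cpow_neg_rpow hp.le hs hr hr_lt

theorem mpMean_re_one_sub_cpow_neg_le {p r s : ℝ} (hp : 0 < p) (hps : 1 < p * s) (hr : 1 / 2 ≤ r)
    (hr_lt : r < 1) :
    mpMean p r (fun z => ((1 - z) ^ ((-s : ℝ) : ℂ)).re)
      ≤ (Real.pi ^ (p * s) / (Real.pi * (p * s - 1))) ^ (1 / p) * (1 - r) ^ (1 / p - s) := by
  have hr_abs : |r| < 1 := abs_lt.2 ⟨by linarith, hr_lt⟩
  have := sub_pos.2 hps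
  rw [mpMean_eq_circleAverage_rpow,
    ← mul_rpow_one_sub_mul_rpow_one_div hp.ne' (by positivity) (sub_pos.2 hr_lt).le]
  refine Real.rpow_le_rpow (Real.circleAverage_nonneg_of_nonneg fun _ _ => by positivity) ?_
    (by positivity)
  calc circleAverage (fun z => |((1 - z) ^ ((-s : ℝ) : ℂ)).re| ^ p) 0 r
      ≤ circleAverage (fun z => ‖1 - z‖ ^ (-(p * s))) 0 r := by
        refine Real.circleAverage_mono (circleIntegrable_abs_re_one_sub_cpow_rpow hr_abs hp.le _)
          (circleIntegrable_norm_one_sub_rpow hr_abs _) fun z _ => ?_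
        simpa only [neg_mul, mul_comm s] using abs_re_cpow_rpow_le (w := 1 - z) (s := -s) hp.le
    _ ≤ _ := circleAverage_norm_one_sub_rpow_neg_le hps hr hr_lt

theorem stmt18_general (q p : ℝ) (hp : 0 < p) (hpq : 1 < p * (q + 1)) :
    ∃ c₁ c₂ : ℝ, 0 < c₁ ∧ 0 < c₂ ∧ ∃ r₀ ∈ Set.Ioo (0 : ℝ) 1, ∀ r ∈ Set.Ioo r₀ 1,
      c₁ * (1 - r) ^ (1 / p - q - 1) ≤
          mpMean p r (fun z => ((1 - z) ^ (-((q : ℂ) + 1))).re) ∧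
        mpMean p r (fun z => ((1 - z) ^ (-((q : ℂ) + 1))).re) ≤
          c₂ * (1 - r) ^ (1 / p - q - 1) := by
  have hs : 0 < q + 1 := pos_of_mul_pos_right (one_pos.trans hpq) hp.le
  have := sub_pos.2 hpq
  have h_exponent : -((q : ℂ) + 1) = ((-(q + 1) : ℝ) : ℂ) := by push_cast; rfl
  rw [h_exponent, sub_sub]
  refine ⟨((2 ^ (-(q + 1)) / 2) ^ p / (2 * Real.pi * (q + 1 + 1))) ^ (1 / p),
    (Real.pi ^ (p * (q + 1)) / (Real.pi * (p * (q + 1) - 1))) ^ (1 / p),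
    by positivity, by positivity, 1 / 2, by norm_num, fun r ⟨hr, hr_lt⟩ => ⟨?_, ?_⟩⟩
  · exact le_mpMean_re_one_sub_cpow_neg hp hs.le (by linarith) hr_lt
  · exact mpMean_re_one_sub_cpow_neg_le hp hpq hr.le hr_lt

/-- For `q > -1`, `p ∈ (1,∞)` with `p(q+1) > 1` and
`f(z) = exp((1/(1-z))^{q+1})` (principal branch), so that
`log|f(z)| = Re((1-z)^{-(q+1)})`, one has `m_p(r, log|f|) ≍ (1-r)^{1/p-q-1}`
as `r ↑ 1`. -/
theorem stmt18 (q p : ℝ) (hq : -1 < q) (hp : 1 < p) (hpq : 1 < p * (q + 1)) :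
    ∃ c₁ c₂ : ℝ, 0 < c₁ ∧ 0 < c₂ ∧ ∃ r₀ ∈ Set.Ioo (0 : ℝ) 1, ∀ r ∈ Set.Ioo r₀ 1,
      c₁ * (1 - r) ^ (1 / p - q - 1) ≤
          mpMean p r (fun z => ((1 - z) ^ (-((q : ℂ) + 1))).re) ∧
        mpMean p r (fun z => ((1 - z) ^ (-((q : ℂ) + 1))).re) ≤
          c₂ * (1 - r) ^ (1 / p - q - 1) :=
  stmt18_general q p (zero_lt_one.trans hp) hpq
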